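/- The equality relation on List Bool is kernel dense, and consequently, for every kernel sparse equivalence relation S on List Bool there is no polynomially length-bounded kernel reduction from the equality relation to S; that is, there is no function f : List Bool → List Bool with a polynomial p : Polynomial ℕ satisfying (f x).length ≤ p.eval x.length for all x and, for all x y : List Bool, x = y ↔ S (f x) (f y). -/

import Mathlib

/-- `numClasses R n` is `#R(n)`: the number of equivalence classes of `R`
containing some string of length at most `n`. -/
noncomputable def numClasses (R : Setoid (List Bool)) (n : ℕ) : ℕ :=
  (Quotient.mk R '' {w : List Bool | w.length ≤ n}).ncard

/-- `R` is kernel sparse if `#R(n)` is polynomially bounded. -/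
def KernelSparse (R : Setoid (List Bool)) : Prop :=
  ∃ q : Polynomial ℕ, ∀ n : ℕ, numClasses R n ≤ q.eval n

/-- `R` is kernel dense if `#R(n)` exceeds every polynomial for some `n`. -/
def KernelDense (R : Setoid (List Bool)) : Prop :=
  ∀ p : Polynomial ℕ, ∃ n : ℕ, numClasses R n > p.eval n

/-- The equality relation on binary strings, as a setoid. -/
def eqSetoid : Setoid (List Bool) := ⟨Eq, eq_equivalence⟩

/-!
A kernel reduction from `R` to `S` induces an injection from the classes of `R` to those of `S`; if
it maps strings of length at most `n` to strings of length at most `p(n)`, this injection gives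
`#R(n) ≤ #S(p(n))`. Kernel sparseness thus pulls back along polynomially length-bounded reductions,
while `#Eq(n) = 2 ^ (n + 1) - 1` is not polynomially bounded.
-/

open Asymptotics Filter Polynomial

theorem monotone_polynomial_eval {R : Type*} [Semiring R] [PartialOrder R] [IsOrderedRing R]
    [CanonicallyOrderedAdd R] (p : R[X]) : Monotone fun x ↦ p.eval x := by
  intro x y hxy
  simp only [eval_eq_sum, Polynomial.sum]
  gcongr

theorem isLittleO_polynomial_eval_natCast_pow {R : Type*} [NormedRing R] (p : R[X]) {r : ℝ}
    (hr : 1 < r) : (fun n : ℕ ↦ p.eval (n : R)) =o[atTop] fun n ↦ r ^ n := by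
  simp only [eval_eq_sum, Polynomial.sum]
  exact .fun_sum fun k _ ↦ (isLittleO_pow_const_const_pow_of_one_lt k hr).const_mul_left _

theorem eventually_polynomial_eval_lt_pow (p : ℕ[X]) {b : ℕ} (hb : 1 < b) :
    ∀ᶠ n in atTop, p.eval n < b ^ n := by
  have hlim := (isLittleO_polynomial_eval_natCast_pow (p.map (Nat.castRingHom ℝ))
    (Nat.one_lt_cast.mpr hb)).tendsto_div_nhds_zero
  filter_upwards [hlim.eventually_lt_const zero_lt_one] with n hn
  have hpow : (0 : ℝ) < (b : ℝ) ^ n := by positivity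
  rw [div_lt_one hpow, eval_natCast_map, eq_natCast, Nat.cast_id] at hn
  exact_mod_cast hn

section CountingLists

variable (α : Type*) [Fintype α] (n : ℕ)

theorem ncard_setOf_length_eq : {l : List α | l.length = n}.ncard = Fintype.card α ^ n := by
  rw [← card_vector n, ← Nat.card_eq_fintype_card]
  rfl

theorem ncard_setOf_length_le :
    {l : List α | l.length ≤ n}.ncard = ∑ k ∈ Finset.range (n + 1), Fintype.card α ^ k := by
  induction n with
  | zero => simp
  | succ n ih =>
    have hsplit : {l : List α | l.length ≤ n + 1} =
        {l | l.length ≤ n} ∪ {l | l.length = n + 1} := by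
      ext l
      exact Nat.le_succ_iff
    have hdisj : Disjoint {l : List α | l.length ≤ n} {l | l.length = n + 1} :=
      Set.disjoint_left.mpr fun l hle heq ↦ (Nat.lt_succ_of_le hle).ne heq
    rw [hsplit, Set.ncard_union_eq hdisj (List.finite_length_le α n)
      (List.finite_length_eq α (n + 1)), ih, ncard_setOf_length_eq, Finset.sum_range_succ _ (n + 1)]

end CountingLists

theorem numClasses_eqSetoid (n : ℕ) : numClasses eqSetoid n = 2 ^ (n + 1) - 1 := by
  have hinj : Function.Injective (Quotient.mk eqSetoid) := fun _ _ h ↦ Quotient.exact h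
  rw [numClasses, Set.ncard_image_of_injective _ hinj, ncard_setOf_length_le, Fintype.card_bool,
    Nat.geomSum_eq le_rfl, Nat.div_one]

theorem kernelDense_eqSetoid : KernelDense eqSetoid := by
  intro p
  obtain ⟨n, hn⟩ := (eventually_polynomial_eval_lt_pow p one_lt_two).exists
  refine ⟨n, ?_⟩
  rw [numClasses_eqSetoid]
  lia

theorem kernelDense_iff_not_kernelSparse {R : Setoid (List Bool)} :
    KernelDense R ↔ ¬ KernelSparse R := by
  simp only [KernelDense, KernelSparse, not_exists, not_forall, not_le, gt_iff_lt]

/-- `KernelReducible R S`: there is a polynomially length-bounded kernel reduction from `R` to `S`.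
The reduction need not be computable: only its output length is constrained. -/
def KernelReducible (R S : Setoid (List Bool)) : Prop :=
  ∃ (f : List Bool → List Bool) (p : ℕ[X]),
    (∀ x, (f x).length ≤ p.eval x.length) ∧ ∀ x y, R.r x y ↔ S.r (f x) (f y)

theorem numClasses_le_of_reduction {R S : Setoid (List Bool)} {f : List Bool → List Bool}
    (hf : ∀ x y, R.r x y ↔ S.r (f x) (f y)) {n m : ℕ}
    (hlen : ∀ x, x.length ≤ n → (f x).length ≤ m) : numClasses R n ≤ numClasses S m := by
  let φ : Quotient R → Quotient S := Quotient.map f fun x y ↦ (hf x y).mp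
  have hφ : Function.Injective φ := by
    rintro ⟨x⟩ ⟨y⟩ hxy
    exact Quotient.sound ((hf x y).mpr (Quotient.exact hxy))
  have hmaps : Set.MapsTo φ (Quotient.mk R '' {w | w.length ≤ n})
      (Quotient.mk S '' {w | w.length ≤ m}) := by
    rintro _ ⟨x, hx, rfl⟩
    exact ⟨f x, hlen x hx, rfl⟩
  exact Set.ncard_le_ncard_of_injOn φ hmaps hφ.injOn ((List.finite_length_le Bool m).image _)

theorem KernelSparse.of_kernelReducible {R S : Setoid (List Bool)} (hS : KernelSparse S)
    (hRS : KernelReducible R S) : KernelSparse R := by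
  obtain ⟨q, hq⟩ := hS
  obtain ⟨f, p, hlen, hf⟩ := hRS
  refine ⟨q.comp p, fun n ↦ ?_⟩
  calc
    numClasses R n ≤ numClasses S (p.eval n) :=
      numClasses_le_of_reduction hf fun x hx ↦ (hlen x).trans (monotone_polynomial_eval p hx)
    _ ≤ q.eval (p.eval n) := hq _
    _ = (q.comp p).eval n := eval_comp.symm

theorem KernelDense.not_kernelReducible {R S : Setoid (List Bool)} (hR : KernelDense R)
    (hS : KernelSparse S) : ¬ KernelReducible R S :=
  fun hRS ↦ kernelDense_iff_not_kernelSparse.mp hR (hS.of_kernelReducible hRS)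

/-- The equality relation is kernel dense, and consequently there is no
polynomially length-bounded kernel reduction from equality to any kernel sparse
equivalence relation. -/
theorem equality_kernelDense_and_no_reduction_to_sparse :
    KernelDense eqSetoid ∧
    ∀ S : Setoid (List Bool), KernelSparse S →
      ¬ ∃ (f : List Bool → List Bool) (p : Polynomial ℕ),
          (∀ x : List Bool, (f x).length ≤ p.eval x.length) ∧
          (∀ x y : List Bool, x = y ↔ S.r (f x) (f y)) :=
  ⟨kernelDense_eqSetoid, fun _ hS ↦ kernelDense_eqSetoid.not_kernelReducible hS⟩
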